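/- Let x₁,…,xₙ and y₁,…,yₙ be complex numbers, pairwise distinct and with xⱼ − y_k never in the lattice ℤ + τℤ, and let λ be a complex number with θ₁(λ) ≠ 0 and θ₁(S+λ) ≠ 0, where S = ∑_{j=1}^n (xⱼ − yⱼ). Define the elliptic Cauchy matrix B̃_{jk} = θ₁(xⱼ − y_k + λ)/θ₁(xⱼ − y_k). Then B̃ is invertible and its inverse is given by (B̃^{−1})_{jk} = [1/(θ₁(λ)·θ₁(S+λ))] · [θ₁(S+λ−x_k+yⱼ)/θ₁(x_k−yⱼ)] · [∏_{ℓ=1}^n θ₁(x_k−y_ℓ) · ∏_{ℓ=1}^n θ₁(x_ℓ−yⱼ)] / [∏_{ℓ≠k} θ₁(x_k−x_ℓ) · ∏_{ℓ≠j} θ₁(y_ℓ−yⱼ)]. -/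

import Mathlib

open Complex

/-- Jacobi theta function θ₁(u|τ). -/
noncomputable def theta1 (u τ : ℂ) : ℂ :=
  -I * ∑' k : ℤ, (-1 : ℂ) ^ k * Complex.exp ((Real.pi : ℂ) * I * τ * ((k : ℂ) + 1/2) ^ 2) *
      Complex.exp ((Real.pi : ℂ) * I * (2 * (k : ℂ) + 1) * u)

/-- Jacobi theta function θ₂(u|τ). -/
noncomputable def theta2 (u τ : ℂ) : ℂ :=
  ∑' k : ℤ, Complex.exp ((Real.pi : ℂ) * I * τ * ((k : ℂ) + 1/2) ^ 2) *
      Complex.exp ((Real.pi : ℂ) * I * (2 * (k : ℂ) + 1) * u)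

/-- Jacobi theta function θ₃(u|τ). -/
noncomputable def theta3 (u τ : ℂ) : ℂ :=
  ∑' k : ℤ, Complex.exp ((Real.pi : ℂ) * I * τ * (k : ℂ) ^ 2) *
      Complex.exp (2 * (Real.pi : ℂ) * I * (k : ℂ) * u)

/-- Jacobi theta function θ₄(u|τ). -/
noncomputable def theta4 (u τ : ℂ) : ℂ :=
  ∑' k : ℤ, (-1 : ℂ) ^ k * Complex.exp ((Real.pi : ℂ) * I * τ * (k : ℂ) ^ 2) *
      Complex.exp (2 * (Real.pi : ℂ) * I * (k : ℂ) * u)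

/-!
Up to the factor `θ₁'(0)⁻¹`, the entries of `B̃⁻¹ B̃` are sums of residues of a quotient
`∏ θ₁(u - w) / ∏ θ₁(u - z)` with equally many zeros and poles and equal sums of zeros and poles,
that is, of an elliptic function; all but one of its residues appear, and the missing one gives the
closed value of the entry. The vanishing of the residue sum is proved algebraically, by induction
on the number of poles: Weierstrass's three-term relation replaces a pair of zeros `a`, `b` by
`p`, `a + b - p`, and choosing `p` to be a pole cancels it. The coefficient that has to be
inverted is `θ₁(zᵢ - zⱼ) θ₁(zᵢ + zⱼ - a - b)`, and among three poles some pair makes it nonzero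
because the zeros of `θ₁` form a group.

The three-term relation is the Plücker relation for the formula
`θ₁(x + y|τ) θ₁(x - y|τ) = θ₃(2x|2τ) θ₂(2y|2τ) - θ₂(2x|2τ) θ₃(2y|2τ)`.
-/

/-- The algebraic properties shared by `θ₁`, the Weierstrass `σ`-function, `sin` and the identity:
`t` vanishes on a subgroup, is odd, and satisfies Weierstrass's three-term relation. The relation
is usually written with products `t (x - y) * t (x + y)`; the extra shift `c` stands for translating
all four variables by `c / 2`, so that no halving is needed in `A`. -/
structure IsSigmaLike {A K : Type*} [AddCommGroup A] [Field K] (t : A → K) : Prop where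
  map_zero : t 0 = 0
  map_neg (u : A) : t (-u) = -t u
  map_sub_eq_zero {u v : A} (hu : t u = 0) (hv : t v = 0) : t (u - v) = 0
  three_term (c x y z w : A) :
    t (x - y) * t (x + y - c) * (t (z - w) * t (z + w - c)) +
      t (x - z) * t (x + z - c) * (t (w - y) * t (w + y - c)) +
      t (x - w) * t (x + w - c) * (t (y - z) * t (y + z - c)) = 0

/-- The sum over the simple poles `z k`, `k ∈ s`, of the residues of
`u ↦ ∏ w ∈ W, t (u - w) / ∏ k ∈ s, t (u - z k)`, up to the common factor `t'(0)⁻¹`. -/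
def residueSum {ι A K : Type*} [DecidableEq ι] [AddCommGroup A] [Field K] (t : A → K)
    (s : Finset ι) (z : ι → A) (W : Multiset A) : K :=
  ∑ k ∈ s, (W.map fun w ↦ t (z k - w)).prod / ∏ l ∈ s.erase k, t (z k - z l)

/-- The elliptic Cauchy matrix `B̃` with `t` in place of `θ₁`. -/
def ellipticCauchyMatrix {ι A K : Type*} [AddCommGroup A] [Field K] (t : A → K) (x y : ι → A)
    (lam : A) : Matrix ι ι K :=
  .of fun j k ↦ t (x j - y k + lam) / t (x j - y k)

/-- The closed formula for the inverse of `ellipticCauchyMatrix t x y lam`; `j` indexes `y` and `k`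
indexes `x`. -/
def ellipticCauchyMatrixInv {ι A K : Type*} [Fintype ι] [DecidableEq ι] [AddCommGroup A] [Field K]
    (t : A → K) (x y : ι → A) (lam : A) : Matrix ι ι K :=
  .of fun j k ↦ (1 / (t lam * t ((∑ j, (x j - y j)) + lam))) *
    (t ((∑ j, (x j - y j)) + lam - x k + y j) / t (x k - y j)) *
    ((∏ l, t (x k - y l)) * ∏ l, t (x l - y j)) /
    ((∏ l ∈ Finset.univ.erase k, t (x k - x l)) * ∏ l ∈ Finset.univ.erase j, t (y l - y j))

lemma residueSum_option {ι A K : Type*} [DecidableEq ι] [Fintype ι] [AddCommGroup A] [Field K]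
    (t : A → K) (z : Option ι → A) (W : Multiset A) :
    residueSum t Finset.univ z W =
      (W.map fun w ↦ t (z none - w)).prod / ∏ l, t (z none - z (some l)) +
        ∑ k, (W.map fun w ↦ t (z (some k) - w)).prod /
          (t (z (some k) - z none) * ∏ l ∈ Finset.univ.erase k, t (z (some k) - z (some l))) := by
  have erase_none : (Finset.univ : Finset (Option ι)).erase none =
      Finset.univ.map Function.Embedding.some := by
    ext (_ | k) <;> simp
  have erase_some (k : ι) : (Finset.univ : Finset (Option ι)).erase (some k) =
      insert none ((Finset.univ.erase k).map Function.Embedding.some) := by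
    ext (_ | l) <;> simp
  have none_notMem (k : ι) : none ∉ (Finset.univ.erase k).map Function.Embedding.some := by simp
  simp only [residueSum, Fintype.sum_option, erase_none, erase_some, Finset.prod_map,
    Finset.prod_insert (none_notMem _), Function.Embedding.some_apply]

namespace IsSigmaLike

variable {ι A K : Type*} [AddCommGroup A] [Field K] {t : A → K}

lemma map_sub_rev (ht : IsSigmaLike t) (u v : A) : t (u - v) = -t (v - u) := by
  rw [← ht.map_neg, neg_sub]

lemma prod_map_sub_rev (ht : IsSigmaLike t) (a : A) (W : Multiset A) :
    (W.map fun w ↦ t (a - w)).prod = (-1) ^ W.card * (W.map fun w ↦ t (w - a)).prod := by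
  simp only [ht.map_sub_rev a]
  simpa using (W.map fun w ↦ t (w - a)).prod_map_neg

lemma exists_map_add_sub_ne_zero (ht : IsSigmaLike t) {s : Finset ι} {z : ι → A}
    (hz : (s : Set ι).Pairwise fun k l ↦ t (z k - z l) ≠ 0) (hs : 2 < s.card) (c : A) :
    ∃ i ∈ s, ∃ j ∈ s, i ≠ j ∧ t (z i + z j - c) ≠ 0 := by
  obtain ⟨i, hi, j, hj, k, hk, hij, hik, hjk⟩ := Finset.two_lt_card.1 hs
  by_cases hzero : t (z i + z j - c) = 0
  · refine ⟨i, hi, k, hk, hik, fun hzero' ↦ hz hj hk hjk ?_⟩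
    simpa using ht.map_sub_eq_zero hzero hzero'
  · exact ⟨i, hi, j, hj, hij, hzero⟩

variable [DecidableEq ι]

lemma residueSum_cons_self (ht : IsSigmaLike t) {s : Finset ι} {z : ι → A}
    (hz : (s : Set ι).Pairwise fun k l ↦ t (z k - z l) ≠ 0) {i : ι} (hi : i ∈ s)
    (W : Multiset A) : residueSum t s z (z i ::ₘ W) = residueSum t (s.erase i) z W := by
  simp only [residueSum, Multiset.map_cons, Multiset.prod_cons]
  rw [← Finset.add_sum_erase s _ hi, sub_self, ht.map_zero, zero_mul, zero_div, zero_add]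
  refine Finset.sum_congr rfl fun k hk ↦ ?_
  obtain ⟨hki, hks⟩ := Finset.mem_erase.1 hk
  rw [← Finset.mul_prod_erase _ _ (Finset.mem_erase.2 ⟨hki.symm, hi⟩), Finset.erase_right_comm,
    mul_div_mul_left _ _ (hz hks hi hki)]

lemma residueSum_three_term (ht : IsSigmaLike t) (s : Finset ι) (z : ι → A) (W : Multiset A)
    (a b p q : A) :
    t (p - q) * t (p + q - (a + b)) * residueSum t s z (a ::ₘ b ::ₘ W) +
      t (q - a) * t (q - b) * residueSum t s z (p ::ₘ (a + b - p) ::ₘ W) +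
      t (a - p) * t (p - b) * residueSum t s z (q ::ₘ (a + b - q) ::ₘ W) = 0 := by
  simp only [residueSum, Finset.mul_sum, ← Finset.sum_add_distrib, Multiset.map_cons,
    Multiset.prod_cons]
  refine Finset.sum_eq_zero fun k _ ↦ ?_
  have reflect (u v : A) : u + v - (a + b) = u - (a + b - v) := by abel
  have h := ht.three_term (a + b) (z k) a p q
  rw [add_comm q a, add_comm (z k) a, add_sub_add_left_eq_sub, add_sub_add_left_eq_sub,
    add_sub_add_left_eq_sub, reflect (z k) p, reflect (z k) q] at h
  linear_combination
    ((W.map fun w ↦ t (z k - w)).prod / ∏ l ∈ s.erase k, t (z k - z l)) * h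

lemma residueSum_singleton (ht : IsSigmaLike t) (z : ι → A) (i : ι) :
    residueSum t {i} z {z i} = 0 := by
  simp [residueSum, ht.map_zero]

lemma residueSum_pair (ht : IsSigmaLike t) {z : ι → A} {i j : ι} (hij : i ≠ j) {a b : A}
    (hab : a + b = z i + z j) : residueSum t {i, j} z {a, b} = 0 := by
  obtain rfl : b = z i + z j - a := eq_sub_of_add_eq' hab
  have hi : t (z i - (z i + z j - a)) = -t (z j - a) := by rw [← ht.map_neg]; congr 1; abel
  have hj : t (z j - (z i + z j - a)) = -t (z i - a) := by rw [← ht.map_neg]; congr 1; abel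
  have erase_i : ({i, j} : Finset ι).erase i = {j} := by grind
  have erase_j : ({i, j} : Finset ι).erase j = {i} := by grind
  simp only [residueSum, Finset.sum_pair hij, erase_i, erase_j, Finset.prod_singleton,
    Multiset.insert_eq_cons, Multiset.map_cons, Multiset.map_singleton, Multiset.prod_cons,
    Multiset.prod_singleton, hi, hj, ht.map_sub_rev (z j) (z i)]
  ring

theorem residueSum_eq_zero (ht : IsSigmaLike t) {s : Finset ι} {z : ι → A}
    (hz : (s : Set ι).Pairwise fun k l ↦ t (z k - z l) ≠ 0) {W : Multiset A}
    (hcard : W.card = s.card) (hsum : W.sum = ∑ k ∈ s, z k) : residueSum t s z W = 0 := by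
  induction hN : s.card generalizing s W with
  | zero => simp [residueSum, Finset.card_eq_zero.1 hN]
  | succ N ih =>
    rw [hN] at hcard
    obtain _ | _ | N := N
    · obtain ⟨i, rfl⟩ := Finset.card_eq_one.1 hN
      obtain ⟨a, rfl⟩ := Multiset.card_eq_one.1 hcard
      obtain rfl : a = z i := by simpa using hsum
      exact ht.residueSum_singleton z i
    · obtain ⟨i, j, hij, rfl⟩ := Finset.card_eq_two.1 hN
      obtain ⟨a, b, rfl⟩ := Multiset.card_eq_two.1 hcard
      exact ht.residueSum_pair hij (by simpa [Finset.sum_pair hij] using hsum)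
    · obtain ⟨a, W₁, rfl, hcard₁⟩ := Multiset.card_eq_succ_iff.1 hcard
      obtain ⟨b, W₂, rfl, hcard₂⟩ := Multiset.card_eq_succ_iff.1 hcard₁
      obtain ⟨i, hi, j, hj, hij, hne⟩ := ht.exists_map_add_sub_ne_zero hz (by omega) (a + b)
      have vanish (k : ι) (hk : k ∈ s) :
          residueSum t s z (z k ::ₘ (a + b - z k) ::ₘ W₂) = 0 := by
        rw [ht.residueSum_cons_self hz hk]
        refine ih (hz.mono (by simp)) ?_ ?_ (by simp [hk, hN])
        · simpa [hk, hN] using hcard₂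
        · rw [Finset.sum_erase_eq_sub hk, ← hsum]
          simp only [Multiset.sum_cons]
          abel
      have key := ht.residueSum_three_term s z W₂ a b (z i) (z j)
      rw [vanish i hi, vanish j hj, mul_zero, mul_zero, add_zero, add_zero] at key
      exact (mul_eq_zero.1 key).resolve_left (mul_ne_zero (hz hi hj hij) hne)

theorem sum_prod_map_sub_div_prod_eq [Fintype ι] (ht : IsSigmaLike t) {x : ι → A} {a : A}
    (hx : Pairwise fun k l ↦ t (x k - x l) ≠ 0) (hxa : ∀ k, t (x k - a) ≠ 0) {W : Multiset A}
    (hcard : W.card = Fintype.card ι + 1) (hsum : W.sum = a + ∑ k, x k) :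
    ∑ k, (W.map fun w ↦ t (x k - w)).prod /
        (t (x k - a) * ∏ l ∈ Finset.univ.erase k, t (x k - x l)) =
      (W.map fun w ↦ t (w - a)).prod / ∏ l, t (x l - a) := by
  let z : Option ι → A := fun o ↦ o.elim a x
  have hz : ((Finset.univ : Finset (Option ι)) : Set (Option ι)).Pairwise
      fun k l ↦ t (z k - z l) ≠ 0 := by
    rintro (_ | k) - (_ | l) - hkl
    · exact absurd rfl hkl
    · simpa [z, ht.map_sub_rev a] using hxa l
    · exact hxa k
    · exact hx (by simpa using hkl)
  have h := ht.residueSum_eq_zero hz (W := W) (by simpa using hcard)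
    (by simpa [z, Fintype.sum_option] using hsum)
  have hprod : ∏ l, t (a - x l) = (-1) ^ Fintype.card ι * ∏ l, t (x l - a) := by
    simp only [ht.map_sub_rev a, Finset.prod_neg, Finset.card_univ]
  rw [residueSum_option] at h
  simp only [z, Option.elim, ht.prod_map_sub_rev a W, hcard, hprod] at h
  rw [pow_succ, mul_assoc, mul_div_mul_left _ _ (pow_ne_zero _ (neg_ne_zero.2 one_ne_zero))] at h
  linear_combination h

variable [Fintype ι] {x y : ι → A} {lam : A}

lemma ellipticCauchyMatrixInv_apply_mul_ellipticCauchyMatrix_apply (ht : IsSigmaLike t)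
    (hxy : ∀ j k, t (x j - y k) ≠ 0) (j k m : ι) :
    ellipticCauchyMatrixInv t x y lam j m * ellipticCauchyMatrix t x y lam m k =
      -(∏ l, t (x l - y j)) / (t lam * t ((∑ i, (x i - y i)) + lam) *
          ∏ l ∈ Finset.univ.erase j, t (y l - y j)) *
        (t (x m - (y j + ((∑ i, (x i - y i)) + lam))) *
          (t (x m - (y k - lam)) * ∏ l ∈ Finset.univ.erase k, t (x m - y l)) /
            (t (x m - y j) * ∏ l ∈ Finset.univ.erase m, t (x m - x l))) := by
  have hnode : t (x m - (y j + ((∑ i, (x i - y i)) + lam))) =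
      -t ((∑ i, (x i - y i)) + lam - x m + y j) := by
    rw [ht.map_sub_rev]; congr 2; abel
  rw [ellipticCauchyMatrixInv, ellipticCauchyMatrix, Matrix.of_apply, Matrix.of_apply, hnode,
    ← sub_add, ← Finset.mul_prod_erase _ (fun l ↦ t (x m - y l)) (Finset.mem_univ k)]
  have hmk := hxy m k
  field_simp

lemma ellipticCauchyMatrixInv_mul_ellipticCauchyMatrix_apply (ht : IsSigmaLike t)
    (hxy : ∀ j k, t (x j - y k) ≠ 0) (hxx : Pairwise fun j k ↦ t (x j - x k) ≠ 0)
    (hS : t ((∑ j, (x j - y j)) + lam) ≠ 0) (j k : ι) :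
    (ellipticCauchyMatrixInv t x y lam * ellipticCauchyMatrix t x y lam) j k =
      t (y j - y k + lam) * (∏ l ∈ Finset.univ.erase k, t (y l - y j)) /
        (t lam * ∏ l ∈ Finset.univ.erase j, t (y l - y j)) := by
  let W : Multiset A := (y j + ((∑ i, (x i - y i)) + lam)) ::ₘ (y k - lam) ::ₘ
    (Finset.univ.erase k).val.map y
  have hcard : W.card = Fintype.card ι + 1 := by
    have hpos := Fintype.card_pos_iff.2 ⟨k⟩
    simp only [W, Multiset.card_cons, Multiset.card_map, Finset.card_val,
      Finset.card_erase_of_mem (Finset.mem_univ k), Finset.card_univ]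
    omega
  have hsum : W.sum = y j + ∑ i, x i := by
    simp only [W, Multiset.sum_cons, ← Finset.sum_eq_multiset_sum,
      Finset.sum_erase_eq_sub (Finset.mem_univ k), Finset.sum_sub_distrib]
    abel
  have hfrac := ht.sum_prod_map_sub_div_prod_eq hxx (fun i ↦ hxy i j) hcard hsum
  simp only [W, Multiset.map_cons, Multiset.map_map, Multiset.prod_cons, Function.comp_def,
    ← Finset.prod_eq_multiset_prod, add_sub_cancel_left] at hfrac
  have hlast : t (y k - lam - y j) = -t (y j - y k + lam) := by
    rw [← ht.map_neg]; congr 1; abel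
  have hnum : ∏ l, t (x l - y j) ≠ 0 := Finset.prod_ne_zero_iff.2 fun l _ ↦ hxy l j
  rw [Matrix.mul_apply, Finset.sum_congr rfl fun m _ ↦
    ht.ellipticCauchyMatrixInv_apply_mul_ellipticCauchyMatrix_apply hxy j k m, ← Finset.mul_sum,
    hfrac, hlast]
  field_simp

theorem ellipticCauchyMatrixInv_mul_ellipticCauchyMatrix (ht : IsSigmaLike t)
    (hxy : ∀ j k, t (x j - y k) ≠ 0) (hxx : Pairwise fun j k ↦ t (x j - x k) ≠ 0)
    (hyy : Pairwise fun j k ↦ t (y j - y k) ≠ 0) (hlam : t lam ≠ 0)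
    (hS : t ((∑ j, (x j - y j)) + lam) ≠ 0) :
    ellipticCauchyMatrixInv t x y lam * ellipticCauchyMatrix t x y lam = 1 := by
  ext j k
  rw [ht.ellipticCauchyMatrixInv_mul_ellipticCauchyMatrix_apply hxy hxx hS]
  obtain rfl | hjk := eq_or_ne j k
  · have hprod : ∏ l ∈ Finset.univ.erase j, t (y l - y j) ≠ 0 :=
      Finset.prod_ne_zero_iff.2 fun l hl ↦ hyy (Finset.ne_of_mem_erase hl)
    rw [sub_self, zero_add, div_self (mul_ne_zero hlam hprod), Matrix.one_apply_eq]
  · have hzero : ∏ l ∈ Finset.univ.erase k, t (y l - y j) = 0 :=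
      Finset.prod_eq_zero (i := j) (by simp [hjk]) (by rw [sub_self, ht.map_zero])
    rw [hzero, mul_zero, zero_div, Matrix.one_apply_ne hjk]

end IsSigmaLike

lemma bijective_sumElim_add_sub :
    Function.Bijective (Sum.elim (fun p : ℤ × ℤ ↦ (p.1 + p.2, p.1 - p.2))
      (fun p : ℤ × ℤ ↦ (p.1 + p.2 + 1, p.1 - p.2))) := by
  constructor
  · rintro (⟨a, b⟩ | ⟨a, b⟩) (⟨c, d⟩ | ⟨c, d⟩) h <;>
      simp only [Sum.elim_inl, Sum.elim_inr, Prod.mk.injEq, Sum.inl.injEq, Sum.inr.injEq,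
        reduceCtorEq] at h ⊢ <;> omega
  · rintro ⟨k, l⟩
    obtain ⟨m, even | odd⟩ := Int.even_or_odd' (k + l)
    · exact ⟨.inl (m, k - m), by simp only [Sum.elim_inl, Prod.mk.injEq]; omega⟩
    · exact ⟨.inr (m, k - m - 1), by simp only [Sum.elim_inr, Prod.mk.injEq]; omega⟩

lemma hasSum_jacobiTheta₂_term_mul (a b : ℂ) {τ : ℂ} (hτ : 0 < τ.im) :
    HasSum (fun p : ℤ × ℤ ↦ jacobiTheta₂_term p.1 a τ * jacobiTheta₂_term p.2 b τ)
      (jacobiTheta₂ a τ * jacobiTheta₂ b τ) := by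
  have ha := (hasSum_jacobiTheta₂_term a hτ).summable.norm
  have hb := (hasSum_jacobiTheta₂_term b hτ).summable.norm
  rw [jacobiTheta₂, jacobiTheta₂, tsum_mul_tsum_of_summable_norm ha hb]
  exact (summable_mul_of_summable_norm ha hb).hasSum

lemma jacobiTheta₂_term_add_mul_term_sub (m r : ℤ) (a b τ : ℂ) :
    jacobiTheta₂_term (m + r) a τ * jacobiTheta₂_term (m - r) b τ =
      jacobiTheta₂_term m (a + b) (2 * τ) * jacobiTheta₂_term r (a - b) (2 * τ) := by
  simp only [jacobiTheta₂_term, ← Complex.exp_add]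
  push_cast
  ring_nf

lemma jacobiTheta₂_term_add_one_mul_term_sub (m r : ℤ) (a b τ : ℂ) :
    jacobiTheta₂_term (m + r + 1) a τ * jacobiTheta₂_term (m - r) b τ =
      cexp (Real.pi * I * (τ + 2 * a)) *
        (jacobiTheta₂_term m (a + b + τ) (2 * τ) * jacobiTheta₂_term r (a - b + τ) (2 * τ)) := by
  simp only [jacobiTheta₂_term, ← Complex.exp_add]
  push_cast
  ring_nf

-- The pairs `(k, l)` in the double series are split according to the parity of `k + l`.
lemma jacobiTheta₂_mul_jacobiTheta₂ (a b : ℂ) {τ : ℂ} (hτ : 0 < τ.im) :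
    jacobiTheta₂ a τ * jacobiTheta₂ b τ =
      jacobiTheta₂ (a + b) (2 * τ) * jacobiTheta₂ (a - b) (2 * τ) +
        cexp (Real.pi * I * (τ + 2 * a)) *
          (jacobiTheta₂ (a + b + τ) (2 * τ) * jacobiTheta₂ (a - b + τ) (2 * τ)) := by
  have h2τ : 0 < (2 * τ).im := by simpa using hτ
  have even_part := hasSum_jacobiTheta₂_term_mul (a + b) (a - b) h2τ
  have odd_part := (hasSum_jacobiTheta₂_term_mul (a + b + τ) (a - b + τ) h2τ).mul_left
    (cexp (Real.pi * I * (τ + 2 * a)))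
  simp only [← jacobiTheta₂_term_add_mul_term_sub] at even_part
  simp only [← jacobiTheta₂_term_add_one_mul_term_sub] at odd_part
  exact ((Equiv.ofBijective _ bijective_sumElim_add_sub).hasSum_iff.2
    (hasSum_jacobiTheta₂_term_mul a b hτ)).unique (even_part.sum odd_part)

lemma theta3_eq_jacobiTheta₂ (u τ : ℂ) : theta3 u τ = jacobiTheta₂ u τ := by
  refine tsum_congr fun k ↦ ?_
  rw [jacobiTheta₂_term, ← Complex.exp_add]
  ring_nf

lemma theta2_eq_exp_mul_jacobiTheta₂ (u τ : ℂ) :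
    theta2 u τ = cexp (Real.pi * I * (τ / 4 + u)) * jacobiTheta₂ (u + τ / 2) τ := by
  rw [jacobiTheta₂, ← tsum_mul_left]
  refine tsum_congr fun k ↦ ?_
  rw [jacobiTheta₂_term, ← Complex.exp_add, ← Complex.exp_add]
  ring_nf

lemma theta3_add_one (u τ : ℂ) : theta3 (u + 1) τ = theta3 u τ := by
  simp only [theta3_eq_jacobiTheta₂, jacobiTheta₂_add_left]

lemma theta2_add_one (u τ : ℂ) : theta2 (u + 1) τ = -theta2 u τ := by
  have hexp : cexp (Real.pi * I * (τ / 4 + (u + 1))) = -cexp (Real.pi * I * (τ / 4 + u)) := by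
    rw [← add_assoc, mul_add, mul_one, Complex.exp_add, Complex.exp_pi_mul_I, mul_neg_one]
  rw [theta2_eq_exp_mul_jacobiTheta₂, theta2_eq_exp_mul_jacobiTheta₂, hexp, add_right_comm u,
    jacobiTheta₂_add_left, neg_mul]

lemma theta2_neg (u τ : ℂ) : theta2 (-u) τ = theta2 u τ := by
  have hshift := jacobiTheta₂_add_left' (u - τ / 2) τ
  rw [show u - τ / 2 + τ = u + τ / 2 by ring] at hshift
  rw [theta2_eq_exp_mul_jacobiTheta₂, theta2_eq_exp_mul_jacobiTheta₂, hshift,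
    show -u + τ / 2 = -(u - τ / 2) by ring, jacobiTheta₂_neg_left, ← mul_assoc, ← Complex.exp_add]
  ring_nf

lemma theta2_add_mul_theta2_sub (x y : ℂ) {τ : ℂ} (hτ : 0 < τ.im) :
    theta2 (x + y) τ * theta2 (x - y) τ =
      theta2 (2 * x) (2 * τ) * theta3 (2 * y) (2 * τ) +
        theta3 (2 * x) (2 * τ) * theta2 (2 * y) (2 * τ) := by
  have hprod := jacobiTheta₂_mul_jacobiTheta₂ (x + y + τ / 2) (x - y + τ / 2) hτ
  have hshift := jacobiTheta₂_add_left' (2 * x) (2 * τ)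
  rw [show x + y + τ / 2 + (x - y + τ / 2) = 2 * x + τ by ring,
    show x + y + τ / 2 - (x - y + τ / 2) = 2 * y by ring,
    show 2 * x + τ + τ = 2 * x + 2 * τ by ring, hshift] at hprod
  simp only [theta2_eq_exp_mul_jacobiTheta₂, theta3_eq_jacobiTheta₂,
    show 2 * τ / 2 = τ by ring]
  rw [mul_mul_mul_comm, hprod]
  simp only [mul_add, ← mul_assoc, ← Complex.exp_add]
  ring_nf

lemma theta1_eq_neg_theta2_add_half (u τ : ℂ) : theta1 u τ = -theta2 (u + 1 / 2) τ := by
  have hterm (k : ℤ) : cexp (Real.pi * I * (2 * k + 1) * (u + 1 / 2)) =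
      I * ((-1) ^ k * cexp (Real.pi * I * (2 * k + 1) * u)) := by
    calc cexp (Real.pi * I * (2 * k + 1) * (u + 1 / 2))
        = cexp (Real.pi / 2 * I) * (cexp (k * (Real.pi * I)) *
            cexp (Real.pi * I * (2 * k + 1) * u)) := by
          rw [← Complex.exp_add, ← Complex.exp_add]
          ring_nf
      _ = _ := by rw [Complex.exp_pi_div_two_mul_I, Complex.exp_int_mul, Complex.exp_pi_mul_I]
  rw [theta1, theta2, neg_mul, ← tsum_mul_left]
  congr 1
  refine tsum_congr fun k ↦ ?_
  rw [hterm]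
  ring

lemma theta1_neg (u τ : ℂ) : theta1 (-u) τ = -theta1 u τ := by
  rw [theta1_eq_neg_theta2_add_half, theta1_eq_neg_theta2_add_half, ← theta2_neg,
    ← theta2_add_one]
  ring_nf

lemma theta1_zero (τ : ℂ) : theta1 0 τ = 0 :=
  self_eq_neg.1 (by simpa using theta1_neg 0 τ)

lemma theta1_add_mul_theta1_sub (x y : ℂ) {τ : ℂ} (hτ : 0 < τ.im) :
    theta1 (x + y) τ * theta1 (x - y) τ =
      theta3 (2 * x) (2 * τ) * theta2 (2 * y) (2 * τ) -
        theta2 (2 * x) (2 * τ) * theta3 (2 * y) (2 * τ) := by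
  have h := theta2_add_mul_theta2_sub (x + 1 / 2) y hτ
  rw [show 2 * (x + 1 / 2) = 2 * x + 1 by ring, theta2_add_one, theta3_add_one] at h
  rw [theta1_eq_neg_theta2_add_half, theta1_eq_neg_theta2_add_half, neg_mul_neg,
    add_right_comm, ← add_sub_right_comm, h]
  ring

lemma differentiable_theta1 {τ : ℂ} (hτ : 0 < τ.im) : Differentiable ℂ (theta1 · τ) := by
  simp only [theta1_eq_neg_theta2_add_half, theta2_eq_exp_mul_jacobiTheta₂]
  have hJ : Differentiable ℂ (jacobiTheta₂ · τ) := fun z ↦ differentiableAt_jacobiTheta₂_fst z hτ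
  fun_prop

lemma theta1_three_term {τ : ℂ} (hτ : 0 < τ.im) (c x y z w : ℂ) :
    theta1 (x - y) τ * theta1 (x + y - c) τ * (theta1 (z - w) τ * theta1 (z + w - c) τ) +
      theta1 (x - z) τ * theta1 (x + z - c) τ * (theta1 (w - y) τ * theta1 (w + y - c) τ) +
      theta1 (x - w) τ * theta1 (x + w - c) τ * (theta1 (y - z) τ * theta1 (y + z - c) τ) = 0 := by
  have hprod (u v : ℂ) : theta1 (u - v) τ * theta1 (u + v - c) τ =
      theta3 (2 * (u - c / 2)) (2 * τ) * theta2 (2 * (v - c / 2)) (2 * τ) -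
        theta2 (2 * (u - c / 2)) (2 * τ) * theta3 (2 * (v - c / 2)) (2 * τ) := by
    rw [← theta1_add_mul_theta1_sub _ _ hτ, mul_comm]
    ring_nf
  simp only [hprod]
  ring

lemma theta1_sub_eq_zero {τ u v : ℂ} (hτ : 0 < τ.im) (hu : theta1 u τ = 0)
    (hv : theta1 v τ = 0) : theta1 (u - v) τ = 0 := by
  -- With `z = 0` two terms of the three-term relation vanish; if `θ₁(u - v) ≠ 0`, the remaining
  -- product of two entire functions of `c` would be identically zero.
  by_contra huv
  have hmul (c : ℂ) : theta1 (u + v - c) τ * theta1 (v - u - c) τ = 0 := by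
    simpa [hu, hv, huv] using theta1_three_term hτ c u v 0 (v - u)
  have hd (a : ℂ) : AnalyticOnNhd ℂ (fun c ↦ theta1 (a - c) τ) Set.univ := fun c _ ↦
    ((differentiable_theta1 hτ).comp (differentiable_id.const_sub a)).analyticAt c
  obtain h | h := (hd (u + v)).eq_zero_or_eq_zero_of_mul_eq_zero (hd (v - u))
    (fun c _ ↦ hmul c) isPreconnected_univ
  · exact huv (by simpa using h (v + v) trivial)
  · exact huv (by simpa using h (v - u - (u - v)) trivial)

lemma isSigmaLike_theta1 {τ : ℂ} (hτ : 0 < τ.im) : IsSigmaLike (theta1 · τ) where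
  map_zero := theta1_zero τ
  map_neg u := theta1_neg u τ
  map_sub_eq_zero := theta1_sub_eq_zero hτ
  three_term := theta1_three_term hτ

theorem elliptic_cauchy_matrix_inverse_general {ι A K : Type*} [Fintype ι] [DecidableEq ι]
    [AddCommGroup A] [Field K] {t : A → K} (ht : IsSigmaLike t) {x y : ι → A} {lam : A}
    (hxy : ∀ j k, t (x j - y k) ≠ 0) (hxx : Pairwise fun j k ↦ t (x j - x k) ≠ 0)
    (hyy : Pairwise fun j k ↦ t (y j - y k) ≠ 0) (hlam : t lam ≠ 0)
    (hS : t ((∑ j, (x j - y j)) + lam) ≠ 0) :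
    ellipticCauchyMatrix t x y lam * ellipticCauchyMatrixInv t x y lam = 1 ∧
      ellipticCauchyMatrixInv t x y lam * ellipticCauchyMatrix t x y lam = 1 :=
  have h := ht.ellipticCauchyMatrixInv_mul_ellipticCauchyMatrix hxy hxx hyy hlam hS
  ⟨mul_eq_one_comm.1 h, h⟩

theorem elliptic_cauchy_matrix_inverse (τ : ℂ) (hτ : 0 < τ.im) (n : ℕ)
    (x y : Fin n → ℂ) (lam : ℂ)
    (hx : Function.Injective x) (hy : Function.Injective y)
    (hlat : ∀ j k, ∀ p q : ℤ, x j - y k ≠ (p : ℂ) + (q : ℂ) * τ)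
    (hxy : ∀ j k, theta1 (x j - y k) τ ≠ 0)
    (hxx : ∀ j k, j ≠ k → theta1 (x j - x k) τ ≠ 0)
    (hyy : ∀ j k, j ≠ k → theta1 (y j - y k) τ ≠ 0)
    (hlam : theta1 lam τ ≠ 0)
    (hS : theta1 ((∑ j, (x j - y j)) + lam) τ ≠ 0)
    (Bt C : Matrix (Fin n) (Fin n) ℂ)
    (hBt : ∀ j k, Bt j k = theta1 (x j - y k + lam) τ / theta1 (x j - y k) τ)
    (hC : ∀ j k, C j k =
      (1 / (theta1 lam τ * theta1 ((∑ j, (x j - y j)) + lam) τ)) *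
        (theta1 ((∑ j, (x j - y j)) + lam - x k + y j) τ / theta1 (x k - y j) τ) *
        ((∏ l, theta1 (x k - y l) τ) * ∏ l, theta1 (x l - y j) τ) /
        ((∏ l ∈ Finset.univ.erase k, theta1 (x k - x l) τ) *
          ∏ l ∈ Finset.univ.erase j, theta1 (y l - y j) τ)) :
    Bt * C = 1 ∧ C * Bt = 1 := by
  obtain rfl : Bt = ellipticCauchyMatrix (theta1 · τ) x y lam := Matrix.ext hBt
  obtain rfl : C = ellipticCauchyMatrixInv (theta1 · τ) x y lam := Matrix.ext hC
  exact elliptic_cauchy_matrix_inverse_general (isSigmaLike_theta1 hτ) hxy hxx hyy hlam hS
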